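/- Suppose −1 < α < 0 and −(2+7√3)α⁴ + 2(15+√2−11√3+√6)α³ + 2(57+3√2−10√3+3√6)α² + 6(20+√2+√6)α + 24 > 0 (this holds exactly for α₋ < α < 0, where α₋ ≈ −0.194 is the smallest real root of the quartic). Then the 3D Lamé system is positive definite with weight Φ: for every u ∈ C_0^∞(ℝ³∖{0};ℝ³), ∫_{ℝ³}(Lu)·(Φu) dx ≥ 0. -/

import Mathlib

/-!
Write `r = |x|`, `ω = x / r`, `β = α / (α + 2)`, `D k i = ∂ₖuᵢ`, `d = div u`. Integrating by parts in
`∫ Lu · Φu / c_α` gives, besides terms quadratic in `D`, the lower order terms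
`β (3 (u·ω)² - |u|²) / r³ - 2 β d (u·ω) / r²`. These have no sign and are not controlled by
`∫ |D|² / r`, since the Hardy constant for that weight is zero. However, up to a divergence they
equal `β ((u·∇)u · ω - d (u·ω)) / r²`, and this is in turn the derivative-of-weight part of the null
Lagrangian `(d² - tr D²) / r`. So the lower order terms can be traded for `-β (d² - tr D²) / r`,
and on `ℝ³ ∖ {0}`
`Lu · Φu / c_α = (1/r) (|D|² + β |Dω|² + (α - β) d² + α β d (ω·Dω) + β tr D²) + div (flux)`,
which is `lame_weighted_eq`. The flux is smooth and compactly supported away from the origin, so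
its divergence integrates to zero (`integral_pd_eq_zero`). The hypothesis on the quartic is used
only through `α > -1/4` (`neg_quarter_lt`), and for `-1/4 ≤ α ≤ 0` the remaining quadratic form in
`D` is pointwise nonnegative by Cauchy–Schwarz (`gradForm_nonneg`).
-/

open MeasureTheory Metric Real Filter

noncomputable section

/-- `ℝ³` as Euclidean space. -/
abbrev E3 : Type := EuclideanSpace ℝ (Fin 3)

/-- Partial derivative `∂ᵢ f` on `ℝ³`. -/
def pd (i : Fin 3) (f : E3 → ℝ) (x : E3) : ℝ :=
  fderiv ℝ f x (EuclideanSpace.single i 1)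

/-- Laplacian on `ℝ³`. -/
def lap (f : E3 → ℝ) (x : E3) : ℝ := ∑ i, pd i (pd i f) x

/-- Divergence of a vector field on `ℝ³`. -/
def divg (u : E3 → Fin 3 → ℝ) (x : E3) : ℝ := ∑ k, pd k (fun y => u y k) x

/-- The 3D Lamé operator `(Lu)ᵢ = -Δuᵢ - α ∂ᵢ (div u)`. -/
def lame (α : ℝ) (u : E3 → Fin 3 → ℝ) (x : E3) (i : Fin 3) : ℝ :=
  - lap (fun y => u y i) x - α * pd i (divg u) x

/-- The constant `c_α = (α+2)/(8π(α+1))`. -/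
def cA (α : ℝ) : ℝ := (α + 2) / (8 * Real.pi * (α + 1))

/-- The fundamental matrix `Φ` of the 3D Lamé system:
`Φ_ij(x) = c_α |x|⁻¹ (δ_ij + (α/(α+2)) xᵢxⱼ/|x|²)`. -/
def Phi (α : ℝ) (x : E3) (i j : Fin 3) : ℝ :=
  cA α * ‖x‖⁻¹ * ((if i = j then (1 : ℝ) else 0) + (α / (α + 2)) * (x i * x j) / ‖x‖ ^ 2)

/-- `u ∈ C₀^∞(U; ℝ³)`: smooth, compactly supported, with support inside `U`. -/
def IsTestOn (U : Set E3) (u : E3 → Fin 3 → ℝ) : Prop :=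
  ContDiff ℝ (⊤ : ℕ∞) u ∧ HasCompactSupport u ∧ tsupport u ⊆ U

/-- `∫_{ℝ³} (Lu)·(Φ(·-y) u) dx`. -/
def lameEnergy (α : ℝ) (u : E3 → Fin 3 → ℝ) (y : E3) : ℝ :=
  ∫ x : E3, ∑ i, ∑ j, lame α u x i * Phi α (x - y) i j * u x j

/-! ### Calculus of partial derivatives -/

lemma pd_add {f g : E3 → ℝ} {x : E3} (k : Fin 3) (hf : DifferentiableAt ℝ f x)
    (hg : DifferentiableAt ℝ g x) : pd k (fun y => f y + g y) x = pd k f x + pd k g x := by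
  unfold pd
  rw [fderiv_fun_add hf hg]; rfl

lemma pd_sub {f g : E3 → ℝ} {x : E3} (k : Fin 3) (hf : DifferentiableAt ℝ f x)
    (hg : DifferentiableAt ℝ g x) : pd k (fun y => f y - g y) x = pd k f x - pd k g x := by
  unfold pd
  rw [fderiv_fun_sub hf hg]; rfl

lemma pd_mul {f g : E3 → ℝ} {x : E3} (k : Fin 3) (hf : DifferentiableAt ℝ f x)
    (hg : DifferentiableAt ℝ g x) :
    pd k (fun y => f y * g y) x = pd k f x * g x + f x * pd k g x := by
  unfold pd
  rw [fderiv_fun_mul hf hg]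
  simp only [_root_.add_apply, _root_.smul_apply, smul_eq_mul]
  ring

lemma pd_const_mul {f : E3 → ℝ} {x : E3} (k : Fin 3) (c : ℝ) (hf : DifferentiableAt ℝ f x) :
    pd k (fun y => c * f y) x = c * pd k f x := by
  unfold pd
  rw [fderiv_const_mul hf]; rfl

lemma pd_pow {f : E3 → ℝ} {x : E3} (k : Fin 3) (n : ℕ) (hf : DifferentiableAt ℝ f x) :
    pd k (fun y => f y ^ n) x = n * f x ^ (n - 1) * pd k f x := by
  unfold pd
  rw [fderiv_fun_pow n hf]; simp

lemma pd_coord (k i : Fin 3) (x : E3) : pd k (fun y => y i) x = if i = k then 1 else 0 := by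
  unfold pd
  have : HasFDerivAt (fun y : E3 => y i) (EuclideanSpace.proj i : E3 →L[ℝ] ℝ) x :=
    (EuclideanSpace.proj i : E3 →L[ℝ] ℝ).hasFDerivAt
  rw [this.fderiv]
  simp

lemma pd_norm_inv (k : Fin 3) {x : E3} (hx : x ≠ 0) :
    pd k (fun y => ‖y‖⁻¹) x = - x k * ‖x‖⁻¹ ^ 3 := by
  unfold pd
  have h0 : ‖x‖ ≠ 0 := norm_ne_zero_iff.mpr hx
  have h1 : HasFDerivAt (fun y : E3 => ‖y‖) (‖x‖⁻¹ • innerSL ℝ x) x := by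
    have h2 : HasFDerivAt (fun y : E3 => ‖y‖ ^ 2) (2 • innerSL ℝ x) x :=
      (hasStrictFDerivAt_norm_sq x).hasFDerivAt
    have h3 := h2.sqrt (by positivity)
    simp only [Real.sqrt_sq (norm_nonneg _)] at h3
    have h5 : (1 / (2 * ‖x‖)) • 2 • innerSL ℝ x = ‖x‖⁻¹ • innerSL ℝ x := by
      ext v
      simp
      field_simp
    rwa [h5] at h3
  have h4 : HasFDerivAt (fun y : E3 => ‖y‖⁻¹) _ x := (hasDerivAt_inv h0).comp_hasFDerivAt x h1
  rw [h4.fderiv]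
  simp [EuclideanSpace.inner_single_right]
  field_simp

lemma contDiff_pd {f : E3 → ℝ} (hf : ContDiff ℝ (⊤ : ℕ∞) f) (k : Fin 3) :
    ContDiff ℝ (⊤ : ℕ∞) (pd k f) := by
  unfold pd
  exact (hf.fderiv_right (m := (⊤ : ℕ∞)) (by simp)).clm_apply contDiff_const

lemma pd_comm {f : E3 → ℝ} (hf : ContDiff ℝ (⊤ : ℕ∞) f) (i j : Fin 3) (x : E3) :
    pd i (pd j f) x = pd j (pd i f) x := by
  have hs : IsSymmSndFDerivAt ℝ f x :=
    hf.contDiffAt.isSymmSndFDerivAt (by simp; exact WithTop.coe_le_coe.mpr le_top)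
  have hd : DifferentiableAt ℝ (fderiv ℝ f) x :=
    ((hf.fderiv_right (m := (⊤ : ℕ∞)) (by simp)).differentiable (by simp)) x
  have key : ∀ a b : Fin 3, pd a (pd b f) x =
      fderiv ℝ (fderiv ℝ f) x (EuclideanSpace.single a 1) (EuclideanSpace.single b 1) := by
    intro a b
    unfold pd
    rw [fderiv_clm_apply hd (differentiableAt_const _)]
    simp
  rw [key, key]
  exact hs.eq _ _

lemma pd_eq_zero_of_notMem {u : E3 → Fin 3 → ℝ} {x : E3} (hx : x ∉ tsupport u) (k i : Fin 3) :
    pd k (fun y => u y i) x = 0 := by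
  have h : (fun y => u y i) =ᶠ[nhds x] fun _ => (0 : ℝ) := by
    filter_upwards [notMem_tsupport_iff_eventuallyEq.mp hx] with y hy
    simp [hy]
  unfold pd
  rw [h.fderiv_eq]; simp

/-! ### Vanishing integrals of divergences -/

/-- A smooth function on `ℝ³ ∖ {0}` that vanishes off the support of a test field extends smoothly
across the origin, so its partial derivatives have zero integral. -/
lemma integral_pd_eq_zero {u : E3 → Fin 3 → ℝ} (hu : IsTestOn ({(0 : E3)}ᶜ) u) {f : E3 → ℝ}
    (hs : ∀ x, x ∉ tsupport u → f x = 0)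
    (hf : ∀ x, x ≠ 0 → ContDiffAt ℝ (⊤ : ℕ∞) f x) (k : Fin 3) :
    Integrable (pd k f) ∧ ∫ x, pd k f x = 0 := by
  have hsub : tsupport f ⊆ tsupport u := by
    refine closure_minimal (fun x hx => ?_) (isClosed_tsupport u)
    by_contra hc
    exact hx (hs x hc)
  have hcs : HasCompactSupport f := hu.2.1.of_isClosed_subset (isClosed_tsupport f) hsub
  have hsm : ContDiff ℝ (⊤ : ℕ∞) f :=
    contDiff_iff_contDiffAt.mpr fun x => by
      by_cases hx : x ∈ tsupport f
      · exact hf x (hu.2.2 (hsub hx))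
      · exact contDiffAt_const.congr_of_eventuallyEq (notMem_tsupport_iff_eventuallyEq.mp hx)
  have hcs' : HasCompactSupport (pd k f) := hcs.fderiv_apply ℝ _
  have hint : Integrable (pd k f) :=
    (contDiff_pd hsm k).continuous.integrable_of_hasCompactSupport hcs'
  refine ⟨hint, ?_⟩
  have := integral_mul_fderiv_eq_neg_fderiv_mul_of_integrable (μ := (volume : Measure E3))
    (f := fun _ : E3 => (1 : ℝ)) (g := f) (v := EuclideanSpace.single k (1 : ℝ))
    (by simp) (by simp only [one_mul]; exact hint)
    (by simpa using hsm.continuous.integrable_of_hasCompactSupport hcs)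
    (fun _ _ => differentiableAt_const _) (fun x _ => hsm.differentiable (by simp) x)
  simp only [one_mul] at this
  exact this.trans (by simp)

lemma pd_sum {f : Fin 3 → E3 → ℝ} {x : E3} (k : Fin 3) (hf : ∀ i, DifferentiableAt ℝ (f i) x) :
    pd k (fun y => ∑ i, f i y) x = ∑ i, pd k (f i) x := by
  unfold pd
  rw [fderiv_fun_sum fun i _ => hf i]; simp

/-! ### The divergence identity -/

/-- The radial moment `x · u(x)`. -/
def radial (u : E3 → Fin 3 → ℝ) (x : E3) : ℝ := ∑ j, x j * u x j

/-- The weighted field `Φu`, without the scalar factor `c_α` and with `β` for `α / (α + 2)`. -/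
def weighted (β : ℝ) (u : E3 → Fin 3 → ℝ) (i : Fin 3) (x : E3) : ℝ :=
  ‖x‖⁻¹ * u x i + β * (‖x‖⁻¹ ^ 3 * radial u x * x i)

/-- The flux whose divergence is the difference between `Lu · Φu / c_α` and a quadratic form in
the first derivatives of `u` alone. -/
def flux (α β : ℝ) (u : E3 → Fin 3 → ℝ) (k : Fin 3) (x : E3) : ℝ :=
  -1 * (∑ i, pd k (fun y => u y i) x * weighted β u i x)
    + -α * (divg u x * weighted β u k x)
    + -(1 / 2) * ((∑ i, u x i ^ 2) * (x k * ‖x‖⁻¹ ^ 3))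
    + -(3 / 2) * β * (radial u x ^ 2 * (x k * ‖x‖⁻¹ ^ 5))
    + β * (‖x‖⁻¹ * (u x k * divg u x - ∑ j, u x j * pd j (fun y => u y k) x))

lemma contDiff_comp {u : E3 → Fin 3 → ℝ} (hu : ContDiff ℝ (⊤ : ℕ∞) u) (i : Fin 3) :
    ContDiff ℝ (⊤ : ℕ∞) (fun y => u y i) :=
  contDiff_pi.mp hu i

lemma contDiff_radial {u : E3 → Fin 3 → ℝ} (hu : ContDiff ℝ (⊤ : ℕ∞) u) :
    ContDiff ℝ (⊤ : ℕ∞) (radial u) := by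
  unfold radial
  have := contDiff_comp hu
  fun_prop

lemma contDiff_divg {u : E3 → Fin 3 → ℝ} (hu : ContDiff ℝ (⊤ : ℕ∞) u) :
    ContDiff ℝ (⊤ : ℕ∞) (divg u) := by
  unfold divg
  exact ContDiff.sum fun i _ => contDiff_pd (contDiff_comp hu i) i

lemma contDiffAt_norm_inv {x : E3} (hx : x ≠ 0) :
    ContDiffAt ℝ (⊤ : ℕ∞) (fun y : E3 => ‖y‖⁻¹) x :=
  (contDiffAt_norm ℝ hx).inv (norm_ne_zero_iff.mpr hx)

lemma contDiffAt_weighted {u : E3 → Fin 3 → ℝ} (hu : ContDiff ℝ (⊤ : ℕ∞) u) (β : ℝ) (i : Fin 3)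
    {x : E3} (hx : x ≠ 0) : ContDiffAt ℝ (⊤ : ℕ∞) (weighted β u i) x := by
  unfold weighted
  have h1 := contDiff_comp hu
  have h2 := contDiff_radial hu
  have h3 := contDiffAt_norm_inv hx
  fun_prop

lemma contDiffAt_flux {u : E3 → Fin 3 → ℝ} (hu : ContDiff ℝ (⊤ : ℕ∞) u) (α β : ℝ) (k : Fin 3)
    {x : E3} (hx : x ≠ 0) : ContDiffAt ℝ (⊤ : ℕ∞) (flux α β u k) x := by
  unfold flux
  have h1 := contDiff_comp hu
  have h2 := contDiff_radial hu
  have h3 := contDiffAt_norm_inv hx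
  have h4 := contDiff_divg hu
  have h5 := fun j i => contDiff_pd (h1 i) j
  have h6 := fun i => contDiffAt_weighted hu β i hx
  fun_prop

lemma flux_eq_zero {u : E3 → Fin 3 → ℝ} (α β : ℝ) (k : Fin 3) {x : E3} (hx : x ∉ tsupport u) :
    flux α β u k x = 0 := by
  have h0 : u x = 0 := image_eq_zero_of_notMem_tsupport hx
  simp [flux, radial, divg, h0, pd_eq_zero_of_notMem hx]

lemma pd_radial {u : E3 → Fin 3 → ℝ} (hu : ContDiff ℝ (⊤ : ℕ∞) u) (k : Fin 3) (x : E3) :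
    pd k (radial u) x = u x k + ∑ j, x j * pd k (fun y => u y j) x := by
  have h1 : ∀ i, DifferentiableAt ℝ (fun y => u y i) x := fun i =>
    (contDiff_comp hu i).differentiable (by simp) x
  have hX : ∀ i, DifferentiableAt ℝ (fun y : E3 => y i) x := fun i => by fun_prop
  unfold radial
  rw [pd_sum k (fun i => (hX i).fun_mul (h1 i))]
  simp only [pd_mul k (hX _) (h1 _), pd_coord, Finset.sum_add_distrib]
  simp

lemma pd_weighted {u : E3 → Fin 3 → ℝ} (hu : ContDiff ℝ (⊤ : ℕ∞) u) (β : ℝ) (k i : Fin 3)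
    {x : E3} (hx : x ≠ 0) :
    pd k (weighted β u i) x =
      ‖x‖⁻¹ * pd k (fun y => u y i) x - x k * ‖x‖⁻¹ ^ 3 * u x i
      + β * (‖x‖⁻¹ ^ 3 * (u x k + ∑ j, x j * pd k (fun y => u y j) x) * x i
        + ‖x‖⁻¹ ^ 3 * radial u x * (if i = k then 1 else 0)
        - 3 * ‖x‖⁻¹ ^ 5 * x k * radial u x * x i) := by
  have h1 : ∀ i, DifferentiableAt ℝ (fun y => u y i) x := fun i =>
    (contDiff_comp hu i).differentiable (by simp) x
  have hX : ∀ i, DifferentiableAt ℝ (fun y : E3 => y i) x := fun i => by fun_prop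
  have hR : DifferentiableAt ℝ (radial u) x := (contDiff_radial hu).differentiable (by simp) x
  have hP : DifferentiableAt ℝ (fun y : E3 => ‖y‖⁻¹) x :=
    (contDiffAt_norm_inv hx).differentiableAt (by simp)
  unfold weighted
  rw [pd_add k (hP.fun_mul (h1 i)) ((((hP.fun_pow 3).fun_mul hR).fun_mul (hX i)).const_mul β),
    pd_mul k hP (h1 i), pd_const_mul k β (((hP.fun_pow 3).fun_mul hR).fun_mul (hX i)),
    pd_mul k ((hP.fun_pow 3).fun_mul hR) (hX i), pd_mul k (hP.fun_pow 3) hR, pd_pow k 3 hP, pd_norm_inv k hx,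
    pd_radial hu, pd_coord]
  push_cast
  ring

lemma pd_divg {u : E3 → Fin 3 → ℝ} (hu : ContDiff ℝ (⊤ : ℕ∞) u) (k : Fin 3) (x : E3) :
    pd k (divg u) x = ∑ j, pd k (pd j (fun y => u y j)) x := by
  unfold divg
  exact pd_sum k fun j => (contDiff_pd (contDiff_comp hu j) j).differentiable (by simp) x

lemma pd_flux {u : E3 → Fin 3 → ℝ} (hu : ContDiff ℝ (⊤ : ℕ∞) u) (α β : ℝ) (k : Fin 3)
    {x : E3} (hx : x ≠ 0) :
    pd k (flux α β u k) x =
      -1 * (∑ i, (pd k (pd k (fun y => u y i)) x * weighted β u i x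
          + pd k (fun y => u y i) x * pd k (weighted β u i) x))
        + -α * (pd k (divg u) x * weighted β u k x + divg u x * pd k (weighted β u k) x)
        + -(1 / 2) * ((∑ i, 2 * u x i * pd k (fun y => u y i) x) * (x k * ‖x‖⁻¹ ^ 3)
          + (∑ i, u x i ^ 2) * (‖x‖⁻¹ ^ 3 - 3 * x k ^ 2 * ‖x‖⁻¹ ^ 5))
        + -(3 / 2) * β * (2 * radial u x * pd k (radial u) x * (x k * ‖x‖⁻¹ ^ 5)
          + radial u x ^ 2 * (‖x‖⁻¹ ^ 5 - 5 * x k ^ 2 * ‖x‖⁻¹ ^ 7))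
        + β * (- x k * ‖x‖⁻¹ ^ 3 * (u x k * divg u x - ∑ j, u x j * pd j (fun y => u y k) x)
          + ‖x‖⁻¹ * (pd k (fun y => u y k) x * divg u x + u x k * pd k (divg u) x
            - ∑ j, (pd k (fun y => u y j) x * pd j (fun y => u y k) x
              + u x j * pd k (pd j (fun y => u y k)) x))) := by
  have h1 : ∀ i, DifferentiableAt ℝ (fun y => u y i) x := fun i =>
    (contDiff_comp hu i).differentiable (by simp) x
  have h2 : ∀ j i, DifferentiableAt ℝ (pd j (fun y => u y i)) x := fun j i =>
    (contDiff_pd (contDiff_comp hu i) j).differentiable (by simp) x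
  have hX : ∀ i, DifferentiableAt ℝ (fun y : E3 => y i) x := fun i => by fun_prop
  have hR : DifferentiableAt ℝ (radial u) x := (contDiff_radial hu).differentiable (by simp) x
  have hD : DifferentiableAt ℝ (divg u) x := (contDiff_divg hu).differentiable (by simp) x
  have hV : ∀ i, DifferentiableAt ℝ (weighted β u i) x := fun i =>
    (contDiffAt_weighted hu β i hx).differentiableAt (by simp)
  have hP : DifferentiableAt ℝ (fun y : E3 => ‖y‖⁻¹) x :=
    (contDiffAt_norm_inv hx).differentiableAt (by simp)
  have a1 := DifferentiableAt.fun_sum (u := Finset.univ) fun i _ => (h2 k i).fun_mul (hV i)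
  have a2 := hD.fun_mul (hV k)
  have a3 := DifferentiableAt.fun_sum (u := Finset.univ) fun i _ => (h1 i).fun_pow 2
  have a3' := (hX k).fun_mul (hP.fun_pow 3)
  have a4 := (hX k).fun_mul (hP.fun_pow 5)
  have a5 := DifferentiableAt.fun_sum (u := Finset.univ) fun j _ => (h1 j).fun_mul (h2 j k)
  have a5' := (h1 k).fun_mul hD
  unfold flux
  rw [pd_add k ((((a1.const_mul (-1)).fun_add (a2.const_mul (-α))).fun_add
      ((a3.fun_mul a3').const_mul _)).fun_add (((hR.fun_pow 2).fun_mul a4).const_mul _))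
      ((hP.fun_mul (a5'.fun_sub a5)).const_mul β),
    pd_add k (((a1.const_mul (-1)).fun_add (a2.const_mul (-α))).fun_add
      ((a3.fun_mul a3').const_mul _)) (((hR.fun_pow 2).fun_mul a4).const_mul _),
    pd_add k ((a1.const_mul (-1)).fun_add (a2.const_mul (-α))) ((a3.fun_mul a3').const_mul _),
    pd_add k (a1.const_mul (-1)) (a2.const_mul (-α)),
    pd_const_mul k _ a1, pd_const_mul k _ a2, pd_const_mul k _ (a3.fun_mul a3'),
    pd_const_mul k _ ((hR.fun_pow 2).fun_mul a4), pd_const_mul k _ (hP.fun_mul (a5'.fun_sub a5)),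
    pd_sum k (fun i => (h2 k i).fun_mul (hV i)), pd_mul k hD (hV k), pd_mul k a3 a3',
    pd_mul k (hR.fun_pow 2) a4, pd_mul k hP (a5'.fun_sub a5), pd_sub k a5' a5,
    pd_mul k (h1 k) hD, pd_sum k (fun j => (h1 j).fun_mul (h2 j k)),
    pd_sum k (fun i => (h1 i).fun_pow 2), pd_mul k (hX k) (hP.fun_pow 3),
    pd_mul k (hX k) (hP.fun_pow 5), pd_pow k 3 hP, pd_pow k 5 hP, pd_pow k 2 hR,
    pd_norm_inv k hx, pd_coord]
  simp only [pd_mul k (h2 _ _) (hV _), pd_mul k (h1 _) (h2 _ _), pd_pow k 2 (h1 _)]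
  simp only [if_true, Nat.cast_ofNat, Nat.add_one_sub_one, pow_one]
  ring

/-- The quadratic form in the gradient matrix `D k i = ∂ₖuᵢ` that remains of `Lu · Φu / c_α` after
removing a divergence; `X` is the position and `P` its inverse length. -/
def gradForm (α β P : ℝ) (X : Fin 3 → ℝ) (D : Fin 3 → Fin 3 → ℝ) : ℝ :=
  P * ((∑ k, ∑ i, D k i ^ 2) + β * (∑ k, (∑ i, D k i * (P * X i)) ^ 2)
    + (α - β) * (∑ k, D k k) ^ 2
    + α * β * (∑ k, D k k) * (∑ k, ∑ i, D k i * (P * X i) * (P * X k))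
    + β * ∑ k, ∑ i, D k i * D i k)

lemma norm_inv_sq {x : E3} (hx : x ≠ 0) :
    ‖x‖⁻¹ ^ 2 * (x 0 ^ 2 + x 1 ^ 2 + x 2 ^ 2) = 1 := by
  have h0 : ‖x‖ ≠ 0 := norm_ne_zero_iff.mpr hx
  have h1 := EuclideanSpace.real_norm_sq_eq x
  rw [Fin.sum_univ_three] at h1
  rw [← h1]
  field_simp

set_option maxHeartbeats 2000000 in
/-- Away from the origin, `Lu · Φu / c_α` is a quadratic form in the gradient of `u` plus a
divergence: the terms containing `u` undifferentiated are absorbed into the flux. -/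
lemma lame_weighted_eq {u : E3 → Fin 3 → ℝ} (hu : ContDiff ℝ (⊤ : ℕ∞) u) {α β : ℝ}
    (hβ : β * (α + 2) = α) {x : E3} (hx : x ≠ 0) :
    ∑ i, lame α u x i * weighted β u i x =
      gradForm α β ‖x‖⁻¹ (fun i => x i) (fun k i => pd k (fun y => u y i) x)
        + ∑ k, pd k (flux α β u k) x := by
  have hp := norm_inv_sq hx
  have hc := fun i j k => pd_comm (contDiff_comp hu k) i j x
  simp only [pd_flux hu α β _ hx, pd_weighted hu β _ _ hx, pd_radial hu, lame, lap, pd_divg hu]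
  simp only [gradForm, weighted, radial, divg]
  simp only [Fin.sum_univ_three, Fin.isValue, if_true, hc 1 0, hc 2 0, hc 2 1]
  simp only [Fin.isValue, zero_ne_one, one_ne_zero, if_false, Fin.reduceEq]
  generalize ‖x‖⁻¹ = P at *
  linear_combination (-(3 / 2) * P ^ 3 * (u x 0 ^ 2 + u x 1 ^ 2 + u x 2 ^ 2)
      - 15 / 2 * β * P ^ 5 * (x 0 * u x 0 + x 1 * u x 1 + x 2 * u x 2) ^ 2
      - 3 * α * β * P ^ 3 * (x 0 * u x 0 + x 1 * u x 1 + x 2 * u x 2)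
        * (pd 0 (fun y => u y 0) x + pd 1 (fun y => u y 1) x + pd 2 (fun y => u y 2) x)) * hp
    + P ^ 3 * (x 0 * u x 0 + x 1 * u x 1 + x 2 * u x 2)
        * (pd 0 (fun y => u y 0) x + pd 1 (fun y => u y 1) x + pd 2 (fun y => u y 2) x) * hβ

/-! ### Positivity of the gradient form -/

/-- Each term of the form other than the leading `|D|²` is bounded below by a negative multiple
of `|D|²` or is nonnegative; for `-1/4 ≤ α ≤ 0` these multiples add up to less than one. -/
lemma gradForm_nonneg {α β P : ℝ} {X : Fin 3 → ℝ} (D : Fin 3 → Fin 3 → ℝ) (hP : 0 ≤ P)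
    (hX : P ^ 2 * (X 0 ^ 2 + X 1 ^ 2 + X 2 ^ 2) = 1) (hα : -(1 / 4) ≤ α) (hα' : α ≤ 0)
    (hβ : β * (α + 2) = α) : 0 ≤ gradForm α β P X D := by
  have hβ0 : β ≤ 0 := by nlinarith
  have hβα : α ≤ β := by nlinarith
  have hw : ∑ i, (P * X i) ^ 2 = 1 := by
    rw [Fin.sum_univ_three]
    linarith
  unfold gradForm
  refine mul_nonneg hP ?_
  generalize hN : ∑ k, ∑ i, D k i ^ 2 = N
  generalize hA : ∑ k, (∑ i, D k i * (P * X i)) ^ 2 = A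
  generalize hd : ∑ k, D k k = d
  generalize hq : ∑ k, ∑ i, D k i * (P * X i) * (P * X k) = q
  generalize hT : ∑ k, ∑ i, D k i * D i k = T
  have hN0 : 0 ≤ N := hN ▸ Finset.sum_nonneg fun k _ => Finset.sum_nonneg fun i _ => sq_nonneg _
  have hAN : A ≤ N := by
    rw [← hA, ← hN]
    refine Finset.sum_le_sum fun k _ => ?_
    have := Finset.sum_mul_sq_le_sq_mul_sq Finset.univ (D k) (fun i => P * X i)
    rwa [hw, mul_one] at this
  have hqA : q ^ 2 ≤ A := by
    have := Finset.sum_mul_sq_le_sq_mul_sq Finset.univ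
      (fun k => ∑ i, D k i * (P * X i)) (fun i => P * X i)
    rw [hw, mul_one, hA] at this
    simpa only [Finset.sum_mul, hq] using this
  have hdN : d ^ 2 ≤ 3 * N := by
    rw [← hd, ← hN]
    simp only [Fin.sum_univ_three]
    nlinarith [sq_nonneg (D 0 0 - D 1 1), sq_nonneg (D 0 0 - D 2 2), sq_nonneg (D 1 1 - D 2 2),
      sq_nonneg (D 0 1), sq_nonneg (D 0 2), sq_nonneg (D 1 0), sq_nonneg (D 1 2),
      sq_nonneg (D 2 0), sq_nonneg (D 2 1)]
  have hTN : T ≤ N := by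
    rw [← hT, ← hN]
    simp only [Fin.sum_univ_three]
    nlinarith [sq_nonneg (D 0 1 - D 1 0), sq_nonneg (D 0 2 - D 2 0), sq_nonneg (D 1 2 - D 2 1)]
  have hdq : -(2 * N) ≤ d * q := by nlinarith [sq_nonneg (d + q)]
  have hαβ : 0 ≤ α * β := mul_nonneg_of_nonpos_of_nonpos hα' hβ0
  have hαβ' : α * β ≤ 1 / 16 := by nlinarith
  have e1 : β * N ≤ β * A := mul_le_mul_of_nonpos_left hAN hβ0
  have e2 : (α - β) * (3 * N) ≤ (α - β) * d ^ 2 :=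
    mul_le_mul_of_nonpos_left hdN (by linarith)
  have e3 : α * β * (-(2 * N)) ≤ α * β * (d * q) := mul_le_mul_of_nonneg_left hdq hαβ
  have e4 : β * N ≤ β * T := mul_le_mul_of_nonpos_left hTN hβ0
  have e5 : 0 ≤ (1 - β + 3 * α - 2 * (α * β)) * N := mul_nonneg (by linarith) hN0
  nlinarith

/-- The quartic is negative on `(-1, -1/4]`, so the hypothesis confines `α` to `(-1/4, 0)`. -/
lemma neg_quarter_lt {α : ℝ} (hα₁ : -1 < α)
    (h : 0 < -(2 + 7 * Real.sqrt 3) * α ^ 4 + 2 * (15 + Real.sqrt 2 - 11 * Real.sqrt 3 + Real.sqrt 6) * α ^ 3 + 2 * (57 + 3 * Real.sqrt 2 - 10 * Real.sqrt 3 + 3 * Real.sqrt 6) * α ^ 2 + 6 * (20 + Real.sqrt 2 + Real.sqrt 6) * α + 24) :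
    -(1 / 4) < α := by
  by_contra! hc
  have h2l : 1.41 ≤ Real.sqrt 2 := Real.le_sqrt_of_sq_le (by norm_num)
  have h2u : Real.sqrt 2 ≤ 1.42 := Real.sqrt_le_iff.mpr (by norm_num)
  have h3l : 1.73 ≤ Real.sqrt 3 := Real.le_sqrt_of_sq_le (by norm_num)
  have h3u : Real.sqrt 3 ≤ 1.74 := Real.sqrt_le_iff.mpr (by norm_num)
  have h6l : 2.44 ≤ Real.sqrt 6 := Real.le_sqrt_of_sq_le (by norm_num)
  have h6u : Real.sqrt 6 ≤ 2.45 := Real.sqrt_le_iff.mpr (by norm_num)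
  have c3 : -1 ≤ α ^ 3 := by nlinarith [sq_nonneg α, sq_nonneg (α + 1)]
  have c3' : α ^ 3 ≤ 0 := by nlinarith [sq_nonneg α]
  have e4 : 0 ≤ (2 + 7 * Real.sqrt 3) * α ^ 4 := by positivity
  have e3 : 2 * (15 + Real.sqrt 2 - 11 * Real.sqrt 3 + Real.sqrt 6) * α ^ 3 ≤ 2 := by nlinarith
  have e2 : 2 * (57 + 3 * Real.sqrt 2 - 10 * Real.sqrt 3 + 3 * Real.sqrt 6) * α ^ 2
      ≤ 103 * α ^ 2 := mul_le_mul_of_nonneg_right (by linarith) (sq_nonneg α)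
  have e1 : 6 * (20 + Real.sqrt 2 + Real.sqrt 6) * α ≤ 143 * α :=
    mul_le_mul_of_nonpos_right (by linarith) (by linarith)
  nlinarith

/-- For `-1 < α < 0` satisfying the quartic inequality (i.e. `α₋ < α < 0`),
the 3D Lamé system is positive definite with weight `Φ`. -/
theorem lame_weighted_positive_definite_of_neg
    (α : ℝ) (hα₁ : -1 < α) (hα₂ : α < 0)
    (h : 0 < -(2 + 7 * Real.sqrt 3) * α ^ 4 + 2 * (15 + Real.sqrt 2 - 11 * Real.sqrt 3 + Real.sqrt 6) * α ^ 3 + 2 * (57 + 3 * Real.sqrt 2 - 10 * Real.sqrt 3 + 3 * Real.sqrt 6) * α ^ 2 + 6 * (20 + Real.sqrt 2 + Real.sqrt 6) * α + 24)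
    (u : E3 → Fin 3 → ℝ) (hu : IsTestOn ({(0 : E3)}ᶜ) u) :
    0 ≤ ∫ x : E3, ∑ i, ∑ j, lame α u x i * Phi α x i j * u x j := by
  have hβ : α / (α + 2) * (α + 2) = α := div_mul_cancel₀ α (by linarith)
  set β : ℝ := α / (α + 2) with hβdef
  have hα := neg_quarter_lt hα₁ h
  have hc : 0 ≤ cA α := by
    unfold cA
    have : 0 < α + 1 := by linarith
    have : 0 < α + 2 := by linarith
    positivity
  have hdiv := fun k => integral_pd_eq_zero hu (fun x hx => flux_eq_zero α β k hx)
    (fun x hx => contDiffAt_flux hu.1 α β k hx) k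
  -- A non-integrable integrand would have the junk integral `0`, which is also nonnegative.
  by_cases hI : Integrable fun x : E3 => ∑ i, ∑ j, lame α u x i * Phi α x i j * u x j
  swap
  · rw [integral_undef hI]
  have hzero : ∫ x : E3, cA α * ∑ k, pd k (flux α β u k) x = 0 := by
    rw [integral_const_mul, integral_finsetSum _ fun k _ => (hdiv k).1]
    simp [(hdiv _).2]
  rw [← hzero]
  refine integral_mono_ae ((integrable_finsetSum _ fun k _ => (hdiv k).1).const_mul _) hI ?_
  filter_upwards [Measure.ae_ne volume (0 : E3)] with x hx
  have hPhi : ∑ i, ∑ j, lame α u x i * Phi α x i j * u x j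
      = cA α * ∑ i, lame α u x i * weighted β u i x := by
    simp only [Phi, weighted, radial, ← hβdef, div_eq_mul_inv, ← inv_pow]
    simp only [Fin.sum_univ_three, Fin.isValue, if_true, zero_ne_one, one_ne_zero, if_false,
      Fin.reduceEq]
    ring
  rw [hPhi, lame_weighted_eq hu.1 hβ hx]
  refine mul_le_mul_of_nonneg_left ?_ hc
  have := gradForm_nonneg (fun k i => pd k (fun y => u y i) x) (inv_nonneg.mpr (norm_nonneg x))
    (norm_inv_sq hx) hα.le hα₂.le hβ
  linarith
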